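/- Let X be a real Gaussian random variable with variance σ² > 0 and set C₁ := −(1/√(2π)) ∫_ℝ log(x²) e^{−x²/2} dx. Then log E X² − E log X² = C₁ if and only if E X = 0. -/

import Mathlib

/-!
Let `F m = E log |X|` and `K m = E X log |X|` for `X` of law `N(m, v)`. The law `N(m, v)` is an
exponential tilt of `N(0, v)`, hence `F' = (K - m F) / v`, and Gaussian integration by parts gives
`K' = F + 1`. Therefore the slope `D` of the gap `F - log (v + m²) / 2` vanishes at `0` and
satisfies `D' + (m / v) D = 2 m² / (v + m²)²`, so `exp (m² / (2 v)) D` is strictly increasing on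
`[0, ∞)`. Thus the gap, an even function of `m`, is strictly increasing in `|m|`, while at `m = 0`
it equals `-C₁ / 2` for every `v`, by scaling.
-/

open MeasureTheory ProbabilityTheory

/-- The constant `C₁ = -(1/√(2π)) ∫ log(x²) e^{-x²/2} dx`. -/
noncomputable def C1 : ℝ :=
  -(Real.sqrt (2 * Real.pi))⁻¹ * ∫ x : ℝ, Real.log (x ^ 2) * Real.exp (-x ^ 2 / 2)

open Filter Set Topology
open scoped NNReal

section ImproperIntegral

variable {E : Type*} [NormedAddCommGroup E] [NormedSpace ℝ E] [CompleteSpace E]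

lemma integral_eq_zero_of_hasDerivAt_off_countable_of_integrable {f f' : ℝ → E} {s : Set ℝ}
    (hs : s.Countable) (hcont : Continuous f) (hderiv : ∀ x ∉ s, HasDerivAt f (f' x) x)
    (hf : Integrable f) (hf' : Integrable f') : ∫ x, f' x = 0 := by
  have ftc (a b : ℝ) : ∫ x in a..b, f' x = f b - f a :=
    integral_eq_of_hasDerivAt_off_countable f f' hs hcont.continuousOn
      (fun x hx => hderiv x hx.2) hf'.intervalIntegrable
  have hright : Tendsto f atTop (𝓝 ((∫ x in Ioi 0, f' x) + f 0)) := by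
    simpa [ftc] using
      (intervalIntegral_tendsto_integral_Ioi 0 hf'.integrableOn tendsto_id).add_const (f 0)
  have hleft : Tendsto f atBot (𝓝 (f 0 - ∫ x in Iic 0, f' x)) := by
    simpa [ftc] using
      (intervalIntegral_tendsto_integral_Iic 0 hf'.integrableOn tendsto_id).const_sub (f 0)
  have hright_zero := (hf.integrableAtFilter atTop).eq_zero_of_tendsto
    (fun t ht => by
      obtain ⟨b, hb⟩ := mem_atTop_sets.1 ht
      exact measure_mono_top (s₁ := Ici b) hb Real.volume_Ici) hright
  have hleft_zero := (hf.integrableAtFilter atBot).eq_zero_of_tendsto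
    (fun t ht => by
      obtain ⟨b, hb⟩ := mem_atBot_sets.1 ht
      exact measure_mono_top (s₁ := Iic b) hb Real.volume_Iic) hleft
  rw [← intervalIntegral.integral_Iic_add_Ioi (b := 0) hf'.integrableOn hf'.integrableOn,
    eq_neg_of_add_eq_zero_left hright_zero, ← sub_eq_zero.1 hleft_zero, add_neg_cancel]

end ImproperIntegral

section ExpWeight

lemma abs_mul_exp_mul_le {s t : ℝ} (hst : |s - t| ≤ 1) (x : ℝ) :
    |x| * Real.exp (s * x) ≤ Real.exp ((t + 2) * x) + Real.exp ((t - 2) * x) := by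
  have habs : |x| ≤ Real.exp |x| := by linarith [Real.add_one_le_exp |x|]
  have hexp : s * x ≤ t * x + |x| := by
    have : (s - t) * x ≤ 1 * |x| := (le_abs_self _).trans (by rw [abs_mul]; gcongr)
    linarith
  calc |x| * Real.exp (s * x) ≤ Real.exp |x| * Real.exp (t * x + |x|) := by gcongr
    _ = Real.exp (t * x) * Real.exp |2 * x| := by
      rw [← Real.exp_add, ← Real.exp_add, abs_mul, abs_two]; ring_nf
    _ ≤ Real.exp (t * x) * (Real.exp (2 * x) + Real.exp (-(2 * x))) := by
      gcongr; exact Real.exp_abs_le _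
    _ = _ := by rw [mul_add, ← Real.exp_add, ← Real.exp_add]; ring_nf

variable {Ω E : Type*} [MeasurableSpace Ω] [NormedAddCommGroup E] [NormedSpace ℝ E]
  {ν : Measure Ω} {X : Ω → ℝ} {g : Ω → E}

lemma norm_exp_mul_smul_smul_le {s t : ℝ} (hst : |s - t| ≤ 1) (x : ℝ) (y : E) :
    ‖Real.exp (s * x) • x • y‖ ≤
      ‖Real.exp ((t + 2) * x) • y‖ + ‖Real.exp ((t - 2) * x) • y‖ := by
  simp only [norm_smul, Real.norm_eq_abs, Real.abs_exp, ← add_mul, ← mul_assoc]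
  gcongr
  rw [mul_comm]
  exact abs_mul_exp_mul_le hst x

lemma integrable_exp_mul_smul_smul (hX : AEStronglyMeasurable X ν)
    (hg : ∀ t : ℝ, Integrable (fun ω => Real.exp (t * X ω) • g ω) ν) (t : ℝ) :
    Integrable (fun ω => Real.exp (t * X ω) • X ω • g ω) ν := by
  refine ((hg (t + 2)).norm.add (hg (t - 2)).norm).mono' ?_
    (ae_of_all _ fun ω => norm_exp_mul_smul_smul_le (by simp) _ _)
  simpa only [Pi.smul_def', smul_comm (X _)] using hX.smul (hg t).aestronglyMeasurable

lemma hasDerivAt_integral_exp_mul_smul (hX : AEStronglyMeasurable X ν)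
    (hg : ∀ t : ℝ, Integrable (fun ω => Real.exp (t * X ω) • g ω) ν) (t : ℝ) :
    HasDerivAt (fun t => ∫ ω, Real.exp (t * X ω) • g ω ∂ν)
      (∫ ω, Real.exp (t * X ω) • X ω • g ω ∂ν) t := by
  refine (hasDerivAt_integral_of_dominated_loc_of_deriv_le (Metric.closedBall_mem_nhds t one_pos)
    (.of_forall fun s => (hg s).aestronglyMeasurable) (hg t)
    (integrable_exp_mul_smul_smul hX hg t).aestronglyMeasurable
    (ae_of_all _ fun ω s hs => norm_exp_mul_smul_smul_le hs _ _)
    ((hg (t + 2)).norm.add (hg (t - 2)).norm) (ae_of_all _ fun ω s _ => ?_)).2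
  simpa only [smul_smul] using ((hasDerivAt_mul_const (X ω)).exp.smul_const (g ω))

end ExpWeight

section GaussianMean

lemma hasDerivAt_exp_mul_sq (c x : ℝ) :
    HasDerivAt (fun x => Real.exp (c * x ^ 2)) (Real.exp (c * x ^ 2) * (2 * c * x)) x := by
  convert! ((hasDerivAt_pow 2 x).const_mul c).exp using 2
  simp only [Nat.cast_ofNat, Nat.add_one_sub_one, pow_one]
  ring

lemma gaussianReal_tilted_mul (m t : ℝ) (v : ℝ≥0) :
    (gaussianReal m v).tilted (t * ·) = gaussianReal (m + v * t) v := by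
  have := isProbabilityMeasure_tilted (integrable_exp_mul_gaussianReal (μ := m) (v := v) t)
  have hmgf : ∫ x, Real.exp (t * x) ∂gaussianReal m v = Real.exp (m * t + v * t ^ 2 / 2) :=
    congrFun mgf_id_gaussianReal t
  have hcomplexMGF (z : ℂ) :
      ∫ x : ℝ, Complex.exp (z * x) ∂gaussianReal m v = Complex.exp (z * m + v * z ^ 2 / 2) :=
    complexMGF_id_gaussianReal z
  refine Measure.ext_of_complexMGF_id_eq (funext fun z => ?_)
  rw [complexMGF_id_gaussianReal]
  simp only [complexMGF, integral_tilted, hmgf, id, Complex.real_smul]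
  calc ∫ x : ℝ, ((Real.exp (t * x) / Real.exp (m * t + v * t ^ 2 / 2) : ℝ) : ℂ) *
          Complex.exp (z * x) ∂gaussianReal m v
      = ∫ x : ℝ, Complex.exp (-(m * t + v * t ^ 2 / 2)) * Complex.exp ((z + t) * x)
          ∂gaussianReal m v := by
        congr with x
        push_cast
        rw [← Complex.exp_sub, ← Complex.exp_add, ← Complex.exp_add]
        ring_nf
    _ = Complex.exp (z * ↑(m + v * t) + v * z ^ 2 / 2) := by
        rw [integral_const_mul, hcomplexMGF, ← Complex.exp_add]
        push_cast
        ring_nf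

variable {E : Type*} [NormedAddCommGroup E] [NormedSpace ℝ E] {v : ℝ≥0} {g : ℝ → E}

lemma gaussianReal_eq_tilted (hv : v ≠ 0) (m : ℝ) :
    gaussianReal m v = (gaussianReal 0 v).tilted (m / v * ·) := by
  rw [gaussianReal_tilted_mul, zero_add, mul_div_cancel₀ _ (NNReal.coe_ne_zero.2 hv)]

lemma integrable_gaussianReal_iff_integrable_exp_smul (hv : v ≠ 0) (m : ℝ) :
    Integrable g (gaussianReal m v) ↔
      Integrable (fun x => Real.exp (m / v * x) • g x) (gaussianReal 0 v) := by
  rw [gaussianReal_eq_tilted hv, integrable_tilted_iff (integrable_exp_mul_gaussianReal _)]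

lemma integral_gaussianReal_eq_exp_smul_integral (hv : v ≠ 0) (g : ℝ → E) (m : ℝ) :
    ∫ x, g x ∂gaussianReal m v =
      Real.exp (-(2 * (v : ℝ))⁻¹ * m ^ 2) • ∫ x, Real.exp (m / v * x) • g x ∂gaussianReal 0 v := by
  have hmgf : ∫ x, Real.exp (m / v * x) ∂gaussianReal 0 v = Real.exp ((2 * (v : ℝ))⁻¹ * m ^ 2) := by
    refine (congrFun mgf_id_gaussianReal (m / v)).trans ?_
    field_simp
    ring_nf
  rw [gaussianReal_eq_tilted hv, integral_tilted, hmgf, ← integral_smul]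
  simp only [div_eq_inv_mul, mul_smul, neg_mul, Real.exp_neg]

lemma integrable_exp_mul_smul_gaussianReal_zero (hv : v ≠ 0)
    (hg : ∀ m, Integrable g (gaussianReal m v)) (t : ℝ) :
    Integrable (fun x => Real.exp (t * x) • g x) (gaussianReal 0 v) := by
  have := (integrable_gaussianReal_iff_integrable_exp_smul hv (t * v)).1 (hg _)
  rwa [mul_div_cancel_right₀ _ (NNReal.coe_ne_zero.2 hv)] at this

lemma integrable_id_smul_gaussianReal (hv : v ≠ 0) (hg : ∀ m, Integrable g (gaussianReal m v))
    (m : ℝ) : Integrable (fun x => x • g x) (gaussianReal m v) :=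
  (integrable_gaussianReal_iff_integrable_exp_smul hv m).2 <|
    integrable_exp_mul_smul_smul aestronglyMeasurable_id
      (integrable_exp_mul_smul_gaussianReal_zero hv hg) _

lemma hasDerivAt_integral_gaussianReal (hv : v ≠ 0) (hg : ∀ m, Integrable g (gaussianReal m v))
    (m : ℝ) :
    HasDerivAt (fun m => ∫ x, g x ∂gaussianReal m v)
      ((v : ℝ)⁻¹ • (∫ x, x • g x ∂gaussianReal m v - m • ∫ x, g x ∂gaussianReal m v)) m := by
  have htransform : HasDerivAt
      (fun m : ℝ => ∫ x, Real.exp (m / v * x) • g x ∂gaussianReal 0 v)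
      ((v : ℝ)⁻¹ • ∫ x, Real.exp (m / v * x) • x • g x ∂gaussianReal 0 v) m := by
    have hcomp := (hasDerivAt_integral_exp_mul_smul aestronglyMeasurable_id
      (integrable_exp_mul_smul_gaussianReal_zero hv hg) (m / v)).scomp m
        ((hasDerivAt_id m).div_const (v : ℝ))
    rwa [one_div] at hcomp
  rw [funext (integral_gaussianReal_eq_exp_smul_integral hv g),
    integral_gaussianReal_eq_exp_smul_integral hv (fun x => x • g x),
    integral_gaussianReal_eq_exp_smul_integral hv g]
  convert! (hasDerivAt_exp_mul_sq _ m).smul htransform using 1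
  module

lemma integrable_gaussianReal_iff_integrable_smul (hv : v ≠ 0) (m : ℝ) :
    Integrable g (gaussianReal m v) ↔ Integrable (fun x => gaussianPDFReal m v x • g x) := by
  rw [gaussianReal_of_var_ne_zero _ hv, integrable_withDensity_iff_integrable_smul'
    (measurable_gaussianPDF _ _) (ae_of_all _ fun _ => gaussianPDF_lt_top)]
  simp only [toReal_gaussianPDF]

lemma hasDerivAt_gaussianPDFReal (m : ℝ) (v : ℝ≥0) (x : ℝ) :
    HasDerivAt (gaussianPDFReal m v) (gaussianPDFReal m v x * (-(v : ℝ)⁻¹ * (x - m))) x := by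
  have hpdf (y : ℝ) : gaussianPDFReal m v y =
      (√(2 * Real.pi * v))⁻¹ * Real.exp (-(2 * (v : ℝ))⁻¹ * (y - m) ^ 2) := by
    rw [gaussianPDFReal, neg_div, div_eq_inv_mul, neg_mul]
  rw [funext hpdf]
  convert! ((hasDerivAt_exp_mul_sq (-(2 * (v : ℝ))⁻¹) (x - m)).comp_sub_const x m).const_mul
    (√(2 * Real.pi * v))⁻¹ using 1
  ring

variable {f f' : ℝ → E} {s : Set ℝ} {m : ℝ}

lemma integral_id_smul_gaussianReal [CompleteSpace E]
    (hs : s.Countable) (hcont : Continuous f) (hderiv : ∀ x ∉ s, HasDerivAt f (f' x) x)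
    (hf : Integrable f (gaussianReal m v)) (hf' : Integrable f' (gaussianReal m v))
    (hxf : Integrable (fun x => x • f x) (gaussianReal m v)) :
    ∫ x, x • f x ∂gaussianReal m v =
      m • ∫ x, f x ∂gaussianReal m v + (v : ℝ) • ∫ x, f' x ∂gaussianReal m v := by
  rcases eq_or_ne v 0 with rfl | hv
  · simp
  have hv' : (v : ℝ) ≠ 0 := NNReal.coe_ne_zero.2 hv
  have hmf : Integrable (fun x => m • f x) (gaussianReal m v) := hf.smul m
  have hcentered : Integrable (fun x => (v : ℝ)⁻¹ • (x • f x - m • f x)) (gaussianReal m v) :=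
    (hxf.sub hmf).smul _
  have hzero : ∫ x, f' x - (v : ℝ)⁻¹ • (x • f x - m • f x) ∂gaussianReal m v = 0 := by
    rw [integral_gaussianReal_eq_integral_smul hv]
    refine integral_eq_zero_of_hasDerivAt_off_countable_of_integrable
      (f := fun x => gaussianPDFReal m v x • f x) hs ?_ (fun x hx => ?_)
      ((integrable_gaussianReal_iff_integrable_smul hv m).1 hf)
      ((integrable_gaussianReal_iff_integrable_smul hv m).1 (hf'.sub hcentered))
    · exact .smul (continuous_iff_continuousAt.2 fun x =>
        (hasDerivAt_gaussianPDFReal m v x).continuousAt) hcont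
    · convert! (hasDerivAt_gaussianPDFReal m v x).smul (hderiv x hx) using 1
      module
  rw [integral_sub hf' hcentered, integral_smul, integral_sub hxf hmf, integral_smul,
    sub_eq_zero] at hzero
  rw [hzero, smul_inv_smul₀ hv', add_sub_cancel]

lemma hasDerivAt_integral_gaussianReal_of_hasDerivAt [CompleteSpace E] (hv : v ≠ 0)
    (hs : s.Countable) (hcont : Continuous f) (hderiv : ∀ x ∉ s, HasDerivAt f (f' x) x)
    (hf : ∀ m, Integrable f (gaussianReal m v)) (hf' : Integrable f' (gaussianReal m v)) :
    HasDerivAt (fun m => ∫ x, f x ∂gaussianReal m v) (∫ x, f' x ∂gaussianReal m v) m := by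
  convert! hasDerivAt_integral_gaussianReal hv hf m using 1
  rw [integral_id_smul_gaussianReal hs hcont hderiv (hf m) hf'
    (integrable_id_smul_gaussianReal hv hf m), add_sub_cancel_left,
    inv_smul_smul₀ (NNReal.coe_ne_zero.2 hv)]

lemma integral_comp_neg_gaussianReal (g : ℝ → E) (m : ℝ) (v : ℝ≥0) :
    ∫ x, g (-x) ∂gaussianReal m v = ∫ x, g x ∂gaussianReal (-m) v := by
  rw [← gaussianReal_map_neg]
  exact ((MeasurableEquiv.neg ℝ).measurableEmbedding.integral_map g).symm

lemma integral_sq_gaussianReal (m : ℝ) (v : ℝ≥0) :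
    ∫ x, x ^ 2 ∂gaussianReal m v = v + m ^ 2 := by
  have h := variance_eq_sub (memLp_id_gaussianReal (μ := m) (v := v) 2)
  simp only [variance_id_gaussianReal, Pi.pow_apply, id, integral_id_gaussianReal] at h
  linarith

end GaussianMean

section LogMean

variable {v : ℝ≥0}

lemma gaussianReal_le_smul_volume (m : ℝ) (hv : v ≠ 0) :
    gaussianReal m v ≤ ENNReal.ofReal (√(2 * Real.pi * v))⁻¹ • volume := by
  rw [gaussianReal_of_var_ne_zero _ hv, ← withDensity_const]
  refine withDensity_mono (ae_of_all _ fun x => ENNReal.ofReal_le_ofReal ?_)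
  rw [gaussianPDFReal]
  refine mul_le_of_le_one_right (by positivity) (Real.exp_le_one_iff.2 ?_)
  exact div_nonpos_of_nonpos_of_nonneg (by nlinarith [sq_nonneg (x - m)]) (by positivity)

lemma integrable_log_gaussianReal (hv : v ≠ 0) (m : ℝ) :
    Integrable Real.log (gaussianReal m v) := by
  have hnear : IntegrableOn Real.log (Icc (-1) 1) (gaussianReal m v) := by
    have hvolume : IntegrableOn Real.log (Icc (-1) 1) :=
      (intervalIntegrable_iff_integrableOn_Icc_of_le (by norm_num)).1
        intervalIntegral.intervalIntegrable_log'
    refine Integrable.mono_measure ?_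
      (Measure.restrict_mono_measure (gaussianReal_le_smul_volume m hv) _)
    rw [Measure.restrict_smul]
    exact hvolume.smul_measure ENNReal.ofReal_ne_top
  have hfar : IntegrableOn Real.log (Icc (-1) 1)ᶜ (gaussianReal m v) := by
    have hid := (memLp_id_gaussianReal (μ := m) (v := v) 1).integrable le_rfl
    refine Integrable.mono hid.integrableOn Real.measurable_log.aestronglyMeasurable
      (ae_restrict_of_forall_mem measurableSet_Icc.compl fun x hx => ?_)
    have hx : 1 < |x| := by simpa [← abs_le] using hx
    rw [← Real.log_abs, Real.norm_of_nonneg (Real.log_nonneg hx.le)]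
    exact Real.log_le_self (abs_nonneg x)
  simpa using hnear.union hfar

/-- The expectation of `log |X|` for `X` of law `N(m, v)`; recall that `Real.log x` is `log |x|`. -/
noncomputable def gaussianLogMean (v : ℝ≥0) (m : ℝ) : ℝ := ∫ x, Real.log x ∂gaussianReal m v

/-- The expectation of `X log |X|` for `X` of law `N(m, v)`. -/
noncomputable def gaussianMulLogMean (v : ℝ≥0) (m : ℝ) : ℝ :=
  ∫ x, x * Real.log x ∂gaussianReal m v

/-- The gap `E log |X| - (log E X²) / 2` for `X` of law `N(m, v)`. -/
noncomputable def gaussianLogGap (v : ℝ≥0) (m : ℝ) : ℝ :=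
  gaussianLogMean v m - Real.log (v + m ^ 2) / 2

/-- The derivative of `gaussianLogGap v`. -/
noncomputable def gaussianLogGapSlope (v : ℝ≥0) (m : ℝ) : ℝ :=
  (v : ℝ)⁻¹ * (gaussianMulLogMean v m - m * gaussianLogMean v m) - m / (v + m ^ 2)

lemma hasDerivAt_gaussianLogMean (hv : v ≠ 0) (m : ℝ) :
    HasDerivAt (gaussianLogMean v)
      ((v : ℝ)⁻¹ * (gaussianMulLogMean v m - m * gaussianLogMean v m)) m :=
  hasDerivAt_integral_gaussianReal hv (integrable_log_gaussianReal hv) m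

lemma hasDerivAt_gaussianMulLogMean (hv : v ≠ 0) (m : ℝ) :
    HasDerivAt (gaussianMulLogMean v) (gaussianLogMean v m + 1) m := by
  have hlog := integrable_log_gaussianReal hv
  convert! hasDerivAt_integral_gaussianReal_of_hasDerivAt hv (countable_singleton 0)
    Real.continuous_mul_log (fun x hx => Real.hasDerivAt_mul_log hx)
    (integrable_id_smul_gaussianReal hv hlog) ((hlog m).add (integrable_const 1)) using 1
  rw [integral_add (hlog m) (integrable_const 1)]
  simp [gaussianLogMean]

lemma hasDerivAt_gaussianLogGap (hv : v ≠ 0) (m : ℝ) :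
    HasDerivAt (gaussianLogGap v) (gaussianLogGapSlope v m) m := by
  have hlog : HasDerivAt (fun m : ℝ => Real.log (v + m ^ 2) / 2) (m / (v + m ^ 2)) m := by
    convert! (((hasDerivAt_pow 2 m).const_add (v : ℝ)).log (by positivity)).div_const 2 using 1
    simp only [Nat.cast_ofNat, Nat.add_one_sub_one, pow_one]
    ring
  exact (hasDerivAt_gaussianLogMean hv m).sub hlog

lemma hasDerivAt_gaussianLogGapSlope (hv : v ≠ 0) (m : ℝ) :
    HasDerivAt (gaussianLogGapSlope v)
      (2 * m ^ 2 / (v + m ^ 2) ^ 2 - m / v * gaussianLogGapSlope v m) m := by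
  have hden : (v : ℝ) + m ^ 2 ≠ 0 := by positivity
  have hquot : HasDerivAt (fun m : ℝ => m / (v + m ^ 2))
      ((v - m ^ 2) / (v + m ^ 2) ^ 2) m := by
    convert! (hasDerivAt_id m).div ((hasDerivAt_pow 2 m).const_add (v : ℝ)) hden using 1
    simp only [one_mul, id_eq, Nat.cast_ofNat, Nat.add_one_sub_one, pow_one]
    ring
  convert! (((hasDerivAt_gaussianMulLogMean hv m).sub ((hasDerivAt_id m).mul
    (hasDerivAt_gaussianLogMean hv m))).const_mul (v : ℝ)⁻¹).sub hquot using 1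
  simp only [gaussianLogGapSlope, id]
  field_simp
  ring

lemma gaussianLogMean_neg (v : ℝ≥0) (m : ℝ) : gaussianLogMean v (-m) = gaussianLogMean v m := by
  simp only [gaussianLogMean, ← integral_comp_neg_gaussianReal, Real.log_neg_eq_log]

lemma gaussianMulLogMean_neg (v : ℝ≥0) (m : ℝ) :
    gaussianMulLogMean v (-m) = -gaussianMulLogMean v m := by
  simp only [gaussianMulLogMean, ← integral_comp_neg_gaussianReal, Real.log_neg_eq_log, neg_mul,
    integral_neg]

lemma gaussianLogGap_abs (v : ℝ≥0) (m : ℝ) : gaussianLogGap v |m| = gaussianLogGap v m := by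
  rcases abs_choice m with h | h <;> simp only [h, gaussianLogGap, gaussianLogMean_neg, neg_sq]

lemma gaussianLogGapSlope_zero (v : ℝ≥0) : gaussianLogGapSlope v 0 = 0 := by
  have hodd : gaussianMulLogMean v 0 = 0 := by
    simpa [self_eq_neg] using gaussianMulLogMean_neg v 0
  simp [gaussianLogGapSlope, hodd]

lemma gaussianLogGapSlope_pos (hv : v ≠ 0) {m : ℝ} (hm : 0 < m) : 0 < gaussianLogGapSlope v m := by
  have hderiv (x : ℝ) :
      HasDerivAt (fun x => Real.exp ((2 * (v : ℝ))⁻¹ * x ^ 2) * gaussianLogGapSlope v x)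
        (Real.exp ((2 * (v : ℝ))⁻¹ * x ^ 2) * (2 * x ^ 2 / (v + x ^ 2) ^ 2)) x := by
    convert! (hasDerivAt_exp_mul_sq _ x).mul (hasDerivAt_gaussianLogGapSlope hv x) using 1
    ring
  have hmono : StrictMonoOn (fun x => Real.exp ((2 * (v : ℝ))⁻¹ * x ^ 2) * gaussianLogGapSlope v x)
      (Ici 0) := by
    refine strictMonoOn_of_hasDerivWithinAt_pos (convex_Ici 0)
      (fun x _ => (hderiv x).continuousAt.continuousWithinAt)
      (fun x _ => (hderiv x).hasDerivWithinAt) (fun x hx => ?_)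
    rw [interior_Ici, mem_Ioi] at hx
    positivity
  have hlt := hmono self_mem_Ici hm.le hm
  simp only [gaussianLogGapSlope_zero, mul_zero] at hlt
  exact pos_of_mul_pos_right hlt (Real.exp_nonneg _)

lemma strictMonoOn_gaussianLogGap (hv : v ≠ 0) : StrictMonoOn (gaussianLogGap v) (Ici 0) :=
  strictMonoOn_of_hasDerivWithinAt_pos (convex_Ici 0)
    (fun x _ => (hasDerivAt_gaussianLogGap hv x).continuousAt.continuousWithinAt)
    (fun x _ => (hasDerivAt_gaussianLogGap hv x).hasDerivWithinAt)
    (fun x hx => gaussianLogGapSlope_pos hv (by simpa using hx))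

lemma gaussianLogGap_eq_gaussianLogGap_zero_iff (hv : v ≠ 0) (m : ℝ) :
    gaussianLogGap v m = gaussianLogGap v 0 ↔ m = 0 := by
  rw [← gaussianLogGap_abs,
    (strictMonoOn_gaussianLogGap hv).eq_iff_eq (abs_nonneg m) self_mem_Ici, abs_eq_zero]

lemma gaussianLogMean_zero (hv : v ≠ 0) :
    gaussianLogMean v 0 = Real.log v / 2 + gaussianLogMean 1 0 := by
  have hsqrt : √(v : ℝ) ≠ 0 := by positivity
  have hscale : gaussianReal 0 v = (gaussianReal 0 1).map (√v * ·) := by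
    rw [gaussianReal_map_const_mul, mul_zero, mul_one]
    congr 1
    ext
    simp
  have := nullSingletonClass_gaussianReal (μ := 0) one_ne_zero
  have hlog : ∀ᵐ x ∂gaussianReal 0 1, Real.log (√v * x) = Real.log v / 2 + Real.log x := by
    filter_upwards [Measure.ae_ne (gaussianReal 0 1) 0] with x hx
    rw [Real.log_mul hsqrt hx, Real.log_sqrt v.coe_nonneg]
  rw [gaussianLogMean, hscale,
    integral_map (by fun_prop) Real.measurable_log.aestronglyMeasurable, integral_congr_ae hlog,
    integral_add (integrable_const _) (integrable_log_gaussianReal one_ne_zero 0)]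
  simp [gaussianLogMean]

lemma gaussianLogGap_zero (hv : v ≠ 0) : gaussianLogGap v 0 = gaussianLogMean 1 0 := by
  simp [gaussianLogGap, gaussianLogMean_zero hv]

lemma integral_log_sq_gaussianReal (m : ℝ) (v : ℝ≥0) :
    ∫ x, Real.log (x ^ 2) ∂gaussianReal m v = 2 * gaussianLogMean v m := by
  simp [gaussianLogMean, Real.log_pow, integral_const_mul]

lemma C1_eq_neg_two_mul_gaussianLogMean : C1 = -(2 * gaussianLogMean 1 0) := by
  rw [← integral_log_sq_gaussianReal, integral_gaussianReal_eq_integral_smul one_ne_zero]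
  simp [C1, gaussianPDFReal, mul_assoc, integral_const_mul, mul_comm (Real.exp _)]

end LogMean

/-- for a real Gaussian random variable `X` with positive variance,
`log E X² - E log X² = C₁` if and only if `E X = 0`. -/
theorem log_expectation_sq_sub_expectation_log_sq_eq_iff
    {Ω : Type*} [MeasurableSpace Ω] (μ : Measure Ω) [IsProbabilityMeasure μ]
    (X : Ω → ℝ) (hX : Measurable X)
    (m : ℝ) (v : NNReal) (hv : v ≠ 0)
    (hlaw : μ.map X = gaussianReal m v) :
    Real.log (∫ ω, (X ω) ^ 2 ∂μ) - ∫ ω, Real.log ((X ω) ^ 2) ∂μ = C1 ↔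
      ∫ ω, X ω ∂μ = 0 := by
  have hX_law : HasLaw X (gaussianReal m v) μ := ⟨hX.aemeasurable, hlaw⟩
  have hmean : ∫ ω, X ω ∂μ = m := hX_law.integral_eq.trans integral_id_gaussianReal
  have hsq : ∫ ω, (X ω) ^ 2 ∂μ = v + m ^ 2 :=
    (hX_law.integral_comp (f := (· ^ 2)) (by fun_prop)).trans (integral_sq_gaussianReal m v)
  have hlog_sq : ∫ ω, Real.log ((X ω) ^ 2) ∂μ = 2 * gaussianLogMean v m :=
    (hX_law.integral_comp (f := fun x => Real.log (x ^ 2))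
      (Measurable.aestronglyMeasurable (by fun_prop))).trans (integral_log_sq_gaussianReal m v)
  rw [hmean, hsq, hlog_sq, ← gaussianLogGap_eq_gaussianLogGap_zero_iff hv, gaussianLogGap_zero hv,
    C1_eq_neg_two_mul_gaussianLogMean, gaussianLogGap]
  constructor <;> intro h <;> linarith
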